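/- Let X be a nonempty compact Hausdorff space. The set of finitely supported idempotent probability measures—those of the form μ(φ) = max_{1 ≤ i ≤ n} (λᵢ + φ(xᵢ)) for some points x₁, …, xₙ ∈ X and reals λ₁, …, λₙ with max λᵢ = 0—is dense in I(X) with respect to the topology of pointwise convergence; that is, for every μ ∈ I(X), every finite family φ₁, …, φ_k ∈ C(X, ℝ), and every ε > 0, there exists a finitely supported ν ∈ I(X) with |μ(φⱼ) − ν(φⱼ)| < ε for j = 1, …, k. -/

import Mathlib

/-- A functional `μ : C(X, ℝ) → ℝ` is an idempotent probability measure if it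
sends constants to their values, is additive with respect to adding constants,
and turns pointwise maxima into maxima. -/
def IsIdempotentProbabilityMeasure {X : Type*} [TopologicalSpace X]
    (μ : C(X, ℝ) → ℝ) : Prop :=
  (∀ c : ℝ, μ (ContinuousMap.const X c) = c) ∧
  (∀ (c : ℝ) (φ : C(X, ℝ)), μ (φ + ContinuousMap.const X c) = μ φ + c) ∧
  (∀ φ ψ : C(X, ℝ), μ (φ ⊔ ψ) = max (μ φ) (μ ψ))

/-!
For a finite set of functions `g` and a function `f`, there is a point `x` at which every
`μ g - g x` is at least `μ f - f x`, up to an arbitrarily small error. Otherwise the maximum of the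
translates `g + (μ f - μ g)`, each of measure `μ f`, would dominate `f + δ` for some `δ > 0`,
contradicting monotonicity of `μ`. So the Dirac functional at `x` with weight `μ f - f x` agrees
with `μ` at `f` and is almost below `μ` on the finite set. The approximating measure is the maximum
of these functionals over the test functions `f`, together with one of weight `0` that comes from
`f = 0`.
-/

namespace IsIdempotentProbabilityMeasure

variable {X : Type*} [TopologicalSpace X] {μ : C(X, ℝ) → ℝ}

lemma map_zero (hμ : IsIdempotentProbabilityMeasure μ) : μ 0 = 0 :=
  hμ.1 0

lemma map_add_const (hμ : IsIdempotentProbabilityMeasure μ) (f : C(X, ℝ)) (c : ℝ) :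
    μ (f + ContinuousMap.const X c) = μ f + c :=
  hμ.2.1 c f

lemma map_sup (hμ : IsIdempotentProbabilityMeasure μ) (f g : C(X, ℝ)) :
    μ (f ⊔ g) = μ f ⊔ μ g :=
  hμ.2.2 f g

lemma monotone (hμ : IsIdempotentProbabilityMeasure μ) : Monotone μ := fun f g hfg ↦ by
  rw [← sup_eq_right, ← hμ.map_sup, sup_eq_right.2 hfg]

lemma map_finset_sup' (hμ : IsIdempotentProbabilityMeasure μ) {ι : Type*} {s : Finset ι}
    (hs : s.Nonempty) (f : ι → C(X, ℝ)) : μ (s.sup' hs f) = s.sup' hs (μ ∘ f) :=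
  Finset.apply_sup'_eq_sup'_comp hs μ hμ.map_sup

lemma exists_forall_mem_le_add (hμ : IsIdempotentProbabilityMeasure μ) {f : C(X, ℝ)}
    {s : Finset C(X, ℝ)} (hs : ∀ g ∈ s, μ g ≤ μ f) {δ : ℝ} (hδ : 0 < δ) :
    ∃ x, ∀ g ∈ s, g x ≤ f x + δ := by
  classical
  by_contra! hlt
  let h : C(X, ℝ) := (insert f s).sup' (Finset.insert_nonempty f s) id
  have measure_h_le : μ h ≤ μ f := by
    rw [hμ.map_finset_sup']
    exact Finset.sup'_le _ _ (Finset.forall_mem_insert _ _ _ |>.2 ⟨le_rfl, hs⟩)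
  have add_const_le_h : f + ContinuousMap.const X δ ≤ h := fun x ↦ by
    obtain ⟨g, hg, hlt_g⟩ := hlt x
    have hgh : g ≤ h := Finset.le_sup' id (Finset.mem_insert_of_mem hg)
    exact hlt_g.le.trans (hgh x)
  have add_le_measure_h : μ f + δ ≤ μ h := by
    simpa only [hμ.map_add_const] using hμ.monotone add_const_le_h
  linarith

lemma exists_forall_mem_sub_le_sub_add (hμ : IsIdempotentProbabilityMeasure μ)
    (f : C(X, ℝ)) (s : Finset C(X, ℝ)) {δ : ℝ} (hδ : 0 < δ) :
    ∃ x, ∀ g ∈ s, μ f - f x ≤ μ g - g x + δ := by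
  classical
  let translate (g : C(X, ℝ)) : C(X, ℝ) := g + ContinuousMap.const X (μ f - μ g)
  have measure_translate (g : C(X, ℝ)) : μ (translate g) = μ f := by
    rw [hμ.map_add_const, add_sub_cancel]
  obtain ⟨x, hx⟩ := hμ.exists_forall_mem_le_add (f := f) (s := s.image translate)
    (Finset.forall_mem_image.2 fun g _ ↦ (measure_translate g).le) hδ
  refine ⟨x, fun g hg ↦ ?_⟩
  have translate_le : g x + (μ f - μ g) ≤ f x + δ := hx _ (Finset.mem_image_of_mem _ hg)
  linarith

lemma exists_forall_mem_le_measure_add (hμ : IsIdempotentProbabilityMeasure μ)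
    (s : Finset C(X, ℝ)) {δ : ℝ} (hδ : 0 < δ) : ∃ x, ∀ g ∈ s, g x ≤ μ g + δ := by
  obtain ⟨x, hx⟩ := hμ.exists_forall_mem_sub_le_sub_add 0 s hδ
  refine ⟨x, fun g hg ↦ ?_⟩
  have zero_le : 0 ≤ μ g - g x + δ := by simpa [hμ.map_zero] using hx g hg
  linarith

lemma exists_weighted_dirac_approx (hμ : IsIdempotentProbabilityMeasure μ)
    (f : C(X, ℝ)) (s : Finset C(X, ℝ)) {δ : ℝ} (hδ : 0 < δ) :
    ∃ x, ∃ a ≤ 0, μ f - δ ≤ a + f x ∧ ∀ g ∈ s, a + g x ≤ μ g + δ := by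
  classical
  obtain ⟨x, hx⟩ := hμ.exists_forall_mem_sub_le_sub_add f (insert 0 s) hδ
  obtain ⟨sub_le_zero, sub_le⟩ := Finset.forall_mem_insert _ _ _ |>.1 hx
  have sub_le_δ : μ f - f x ≤ δ := by simpa [hμ.map_zero] using sub_le_zero
  -- Truncating the weight `μ f - f x` at `0` changes it by at most `δ`.
  refine ⟨x, min (μ f - f x) 0, min_le_right _ _, ?_, fun g hg ↦ ?_⟩
  · have le_min_weight : μ f - f x - δ ≤ min (μ f - f x) 0 :=
      le_min (by linarith) (by linarith)
    linarith
  · linarith [sub_le g hg, min_le_left (μ f - f x) 0]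

end IsIdempotentProbabilityMeasure

theorem finitelySupported_dense_general {X : Type*} [TopologicalSpace X]
    (μ : C(X, ℝ) → ℝ) (hμ : IsIdempotentProbabilityMeasure μ)
    (k : ℕ) (φ : Fin k → C(X, ℝ)) (ε : ℝ) (hε : 0 < ε) :
    ∃ (n : ℕ) (x : Fin (n + 1) → X) (lam : Fin (n + 1) → ℝ),
      Finset.univ.sup' Finset.univ_nonempty lam = 0 ∧
      ∀ j : Fin k,
        |μ (φ j) - Finset.univ.sup' Finset.univ_nonempty
          (fun i => lam i + (φ j) (x i))| < ε := by
  classical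
  let s : Finset C(X, ℝ) := Finset.univ.image φ
  have mem_s (j) : φ j ∈ s := Finset.mem_image_of_mem φ (Finset.mem_univ j)
  obtain ⟨x₀, hx₀⟩ := hμ.exists_forall_mem_le_measure_add s (half_pos hε)
  choose y a a_nonpos le_add add_le using fun i ↦
    hμ.exists_weighted_dirac_approx (φ i) s (half_pos hε)
  refine ⟨k, Fin.cons x₀ y, Fin.cons 0 a, le_antisymm (Finset.sup'_le _ _ fun i _ ↦ ?_)
    (Finset.le_sup' (Fin.cons 0 a : Fin (k + 1) → ℝ) (Finset.mem_univ 0)), fun j ↦ ?_⟩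
  · cases i using Fin.cases with
    | zero => exact le_rfl
    | succ i => exact a_nonpos i
  set ν := Finset.univ.sup' Finset.univ_nonempty fun i : Fin (k + 1) ↦
    (Fin.cons 0 a : Fin (k + 1) → ℝ) i + φ j ((Fin.cons x₀ y : Fin (k + 1) → X) i)
  have ν_le : ν ≤ μ (φ j) + ε / 2 := Finset.sup'_le _ _ fun i _ ↦ by
    cases i using Fin.cases with
    | zero => simpa using hx₀ _ (mem_s j)
    | succ i => exact add_le i _ (mem_s j)
  have le_ν : μ (φ j) - ε / 2 ≤ ν :=
    Finset.le_sup'_of_le _ (Finset.mem_univ j.succ) (le_add j)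
  rw [abs_lt]
  constructor <;> linarith

/-- Finitely supported idempotent probability measures are dense in `I(X)` for
the topology of pointwise convergence: any `μ ∈ I(X)` is approximated, on any
finite family of test functions and within any `ε > 0`, by a measure of the
form `φ ↦ max_i (λᵢ + φ(xᵢ))` with `max_i λᵢ = 0`. -/
theorem finitelySupported_dense
    {X : Type*} [TopologicalSpace X] [CompactSpace X] [T2Space X] [Nonempty X]
    (μ : C(X, ℝ) → ℝ) (hμ : IsIdempotentProbabilityMeasure μ)
    (k : ℕ) (φ : Fin k → C(X, ℝ)) (ε : ℝ) (hε : 0 < ε) :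
    ∃ (n : ℕ) (x : Fin (n + 1) → X) (lam : Fin (n + 1) → ℝ),
      Finset.univ.sup' Finset.univ_nonempty lam = 0 ∧
      ∀ j : Fin k,
        |μ (φ j) - Finset.univ.sup' Finset.univ_nonempty
          (fun i => lam i + (φ j) (x i))| < ε :=
  finitelySupported_dense_general μ hμ k φ ε hε
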